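/- Let S be an ordered semigroup satisfying axioms O1–O6. Then any two functionals λ₁, λ₂ on S have a least upper bound λ₁ ∨ λ₂ in F(S) with respect to the pointwise order. -/

import Mathlib

open scoped ENNReal

/-- `CC s t` : `s` is (sequentially) compactly contained in `t`, written `s ≪ t`. -/
def CC {S : Type*} [AddCommMonoid S] [PartialOrder S] (s t : S) : Prop :=
  ∀ u : ℕ → S, Monotone u → ∀ x : S, IsLUB (Set.range u) x → t ≤ x → ∃ n, s ≤ u n

/-- An ordered semigroup (positive, with translation invariant order) satisfying axioms O1-O5. -/
structure CuO5 (S : Type*) [AddCommMonoid S] [PartialOrder S] : Prop where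
  addRightMono : ∀ {s t : S}, s ≤ t → ∀ r : S, s + r ≤ t + r
  zeroLe : ∀ s : S, 0 ≤ s
  O1 : ∀ u : ℕ → S, Monotone u → ∃ x : S, IsLUB (Set.range u) x
  O2 : ∀ s : S, ∃ u : ℕ → S, (∀ n, CC (u n) (u (n + 1))) ∧ IsLUB (Set.range u) s
  O3 : ∀ {s₁ t₁ s₂ t₂ : S}, CC s₁ t₁ → CC s₂ t₂ → CC (s₁ + s₂) (t₁ + t₂)
  O4 : ∀ u v : ℕ → S, Monotone u → Monotone v → ∀ x y : S,
    IsLUB (Set.range u) x → IsLUB (Set.range v) y →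
    IsLUB (Set.range fun n => u n + v n) (x + y)
  O5 : ∀ {s' s t : S}, CC s' s → s ≤ t → ∃ r : S, s' + r ≤ t ∧ t ≤ s + r

/-- Axioms O1-O6. -/
structure CuO6 (S : Type*) [AddCommMonoid S] [PartialOrder S] extends CuO5 S : Prop where
  O6 : ∀ {s r t : S}, s ≤ r + t → ∀ {s' : S}, CC s' s →
    ∃ r' t' : S, s' ≤ r' + t' ∧ r' ≤ r ∧ r' ≤ s ∧ t' ≤ t ∧ t' ≤ s

/-- A functional on `S`: additive, order preserving, zero preserving map to `[0,∞]`
preserving suprema of increasing sequences. -/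
structure IsFunctional {S : Type*} [AddCommMonoid S] [PartialOrder S] (l : S → ℝ≥0∞) : Prop where
  map_zero : l 0 = 0
  map_add : ∀ s t : S, l (s + t) = l s + l t
  mono : ∀ {s t : S}, s ≤ t → l s ≤ l t
  map_sup : ∀ u : ℕ → S, Monotone u → ∀ x : S, IsLUB (Set.range u) x → l x = ⨆ n, l (u n)

/-- Real multiplication on `S` : a map `(0,∞] × S → S` additive, order preserving and
sup-(of increasing sequences)-preserving in each variable, with `1 · s = s`.
Scalars are elements of `ℝ≥0∞` required to be positive. -/
structure RealMul (S : Type*) [AddCommMonoid S] [PartialOrder S] where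
  smul : ℝ≥0∞ → S → S
  add_left : ∀ {a b : ℝ≥0∞}, 0 < a → 0 < b → ∀ s : S, smul (a + b) s = smul a s + smul b s
  add_right : ∀ {a : ℝ≥0∞}, 0 < a → ∀ s t : S, smul a (s + t) = smul a s + smul a t
  mono_left : ∀ {a b : ℝ≥0∞}, 0 < a → a ≤ b → ∀ s : S, smul a s ≤ smul b s
  mono_right : ∀ {a : ℝ≥0∞}, 0 < a → ∀ {s t : S}, s ≤ t → smul a s ≤ smul a t
  sup_left : ∀ u : ℕ → ℝ≥0∞, Monotone u → 0 < u 0 → ∀ s : S,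
    IsLUB (Set.range fun n => smul (u n) s) (smul (⨆ n, u n) s)
  sup_right : ∀ {a : ℝ≥0∞}, 0 < a → ∀ u : ℕ → S, Monotone u → ∀ x : S,
    IsLUB (Set.range u) x → IsLUB (Set.range fun n => smul a (u n)) (smul a x)
  one_smul : ∀ s : S, smul 1 s = s

/-- `D` is a dense subset of `S`: every element of `S` is the supremum of a rapidly
increasing sequence of elements of `D`. -/
def IsDenseSub {S : Type*} [AddCommMonoid S] [PartialOrder S] (D : Set S) : Prop :=
  ∀ s : S, ∃ u : ℕ → S, (∀ n, u n ∈ D) ∧ (∀ n, CC (u n) (u (n + 1))) ∧ IsLUB (Set.range u) s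

/-- `m` is the least upper bound of the functionals `l₁` and `l₂` in `F(S)`
(pointwise order). -/
def IsFSup {S : Type*} [AddCommMonoid S] [PartialOrder S] (l₁ l₂ m : S → ℝ≥0∞) : Prop :=
  IsFunctional m ∧ (∀ s, l₁ s ≤ m s) ∧ (∀ s, l₂ s ≤ m s) ∧
    ∀ d : S → ℝ≥0∞, IsFunctional d → (∀ s, l₁ s ≤ d s) → (∀ s, l₂ s ≤ d s) → ∀ s, m s ≤ d s

/-- `m` is the greatest lower bound of the functionals `l₁` and `l₂` in `F(S)`
(pointwise order). -/
def IsFInf {S : Type*} [AddCommMonoid S] [PartialOrder S] (l₁ l₂ m : S → ℝ≥0∞) : Prop :=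
  IsFunctional m ∧ (∀ s, m s ≤ l₁ s) ∧ (∀ s, m s ≤ l₂ s) ∧
    ∀ d : S → ℝ≥0∞, IsFunctional d → (∀ s, d s ≤ l₁ s) → (∀ s, d s ≤ l₂ s) → ∀ s, d s ≤ m s

/-- An isomorphism of ordered semigroups between `S` and the extended natural numbers. -/
def IsOrdSemigroupIso {S : Type*} [AddCommMonoid S] [PartialOrder S] (e : S ≃ ℕ∞) : Prop :=
  (∀ a b : S, e (a + b) = e a + e b) ∧ e 0 = 0 ∧ ∀ a b : S, a ≤ b ↔ e a ≤ e b

/-!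
The supremum is obtained from the Riesz–Kantorovich formula
`f s = ⨆ (a + b ≤ s), (l₁ a + l₂ b)`, which is monotone, superadditive and continuous along
increasing sequences. Without cancellation in `S`, Riesz decomposition holds only for a large
multiple of an element and up to a small error, so `f` need not be additive. Passing to
`s ↦ ⨆ n, f (n • s) / n` absorbs the multiples and makes it so.

Decomposition of multiples: if `a ≤ s + t`, then O6 gives `a ≲ a₁ + a₂` with `a₁ ≤ s`, `a₂ ≤ t`, and
O5 gives a complement `r` of `a₁` in `a`, so that `a₁ + r ≲ a₂ + a₁`. Iterating,
`n • r ≤ n • r + a₁ ≲ n • a₂ + a₁`, where the single `a₁` is negligible after division by `n`,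
and O6 extracts from `n • r` the part lying below `n • t`.
-/

section FunctionalSup

theorem nsmul_add_le_nsmul_add {S : Type*} [AddCommMonoid S] [Preorder S] [IsOrderedAddMonoid S]
    {r t c : S} (h : r + c ≤ t + c) (n : ℕ) : n • r + c ≤ n • t + c := by
  induction n with
  | zero => simp
  | succ n ih => calc
      (n + 1) • r + c = r + (n • r + c) := by rw [succ_nsmul']; abel
      _ ≤ r + (n • t + c) := by gcongr
      _ = n • t + (r + c) := by abel
      _ ≤ n • t + (t + c) := by gcongr
      _ = (n + 1) • t + c := by rw [succ_nsmul]; abel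

theorem exists_ne_zero_nsmul_eq {ε : ℝ≥0∞} (hε : ε ≠ 0) {n : ℕ} (hn : n ≠ 0) :
    ∃ δ : ℝ≥0∞, δ ≠ 0 ∧ n • δ = ε := by
  have hn' : (n : ℝ≥0∞) ≠ 0 := Nat.cast_ne_zero.2 hn
  have hn_top : (n : ℝ≥0∞) ≠ ∞ := ENNReal.natCast_ne_top n
  refine ⟨ε / n, ENNReal.div_ne_zero.2 ⟨hε, hn_top⟩, ?_⟩
  rw [nsmul_eq_mul, ENNReal.mul_div_cancel hn' hn_top]

variable {S : Type*} [AddCommMonoid S]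

/-- The homogenization of `f`: the least function `g ≥ f` such that `g (n • s) ≤ n * g s` for all
positive integers `n`. It upgrades inequalities that hold after passing to a multiple. -/
noncomputable def homogenization (f : S → ℝ≥0∞) (s : S) : ℝ≥0∞ :=
  ⨆ n : ℕ+, f ((n : ℕ) • s) / (n : ℕ)

section Homogenization

variable {f : S → ℝ≥0∞}

theorem homogenization_le_iff {s : S} {c : ℝ≥0∞} :
    homogenization f s ≤ c ↔ ∀ n : ℕ, n ≠ 0 → f (n • s) ≤ n * c := by
  have hdiv (n : ℕ+) : f ((n : ℕ) • s) / (n : ℕ) ≤ c ↔ f ((n : ℕ) • s) ≤ (n : ℕ) * c := by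
    rw [ENNReal.div_le_iff (Nat.cast_ne_zero.2 n.ne_zero) (ENNReal.natCast_ne_top n), mul_comm]
  simp only [homogenization, iSup_le_iff, hdiv]
  exact ⟨fun h n hn => h ⟨n, Nat.pos_of_ne_zero hn⟩, fun h n => h n n.ne_zero⟩

theorem map_nsmul_le_mul_homogenization {n : ℕ} (hn : n ≠ 0) (s : S) :
    f (n • s) ≤ n * homogenization f s :=
  homogenization_le_iff.1 le_rfl n hn

theorem le_homogenization (s : S) : f s ≤ homogenization f s := by
  simpa using map_nsmul_le_mul_homogenization (f := f) one_ne_zero s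

theorem homogenization_le {g : S → ℝ≥0∞} (hg : ∀ (n : ℕ) (s : S), g (n • s) ≤ n * g s)
    (hfg : ∀ s, f s ≤ g s) (s : S) : homogenization f s ≤ g s :=
  homogenization_le_iff.2 fun n _ => (hfg (n • s)).trans (hg n s)

theorem homogenization_zero (h₀ : f 0 = 0) : homogenization f 0 = 0 := by
  simp [homogenization, h₀]

theorem homogenization_nsmul_le {n : ℕ} (hn : n ≠ 0) (s : S) :
    homogenization f (n • s) ≤ n * homogenization f s := by
  refine homogenization_le_iff.2 fun k hk => ?_
  calc f (k • n • s) = f ((k * n) • s) := by rw [mul_nsmul']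
    _ ≤ (k * n : ℕ) * homogenization f s := map_nsmul_le_mul_homogenization (mul_ne_zero hk hn) s
    _ = k * (n * homogenization f s) := by rw [Nat.cast_mul, mul_assoc]

theorem homogenization_add_le (hf : ∀ s t, f (s + t) ≤ homogenization f s + homogenization f t)
    (s t : S) : homogenization f (s + t) ≤ homogenization f s + homogenization f t :=
  homogenization_le_iff.2 fun n hn => calc
    f (n • (s + t)) = f (n • s + n • t) := by rw [nsmul_add]
    _ ≤ homogenization f (n • s) + homogenization f (n • t) := hf _ _
    _ ≤ n * homogenization f s + n * homogenization f t :=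
      add_le_add (homogenization_nsmul_le hn s) (homogenization_nsmul_le hn t)
    _ = n * (homogenization f s + homogenization f t) := (mul_add _ _ _).symm

theorem mul_map_le_map_nsmul_of_superadditive (hf : ∀ s t, f s + f t ≤ f (s + t)) (n : ℕ) (s : S) :
    n * f s ≤ f (n • s) := by
  induction n with
  | zero => simp
  | succ n ih => calc
      (n + 1 : ℕ) * f s = n * f s + f s := by push_cast; ring
      _ ≤ f (n • s) + f s := by gcongr
      _ ≤ f ((n + 1) • s) := by rw [succ_nsmul]; exact hf _ _

theorem map_nsmul_div_le_of_superadditive (hf : ∀ s t, f s + f t ≤ f (s + t)) (n k : ℕ+) (s : S) :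
    f ((n : ℕ) • s) / (n : ℕ) ≤ f (((k * n : ℕ+) : ℕ) • s) / ((k * n : ℕ+) : ℕ) := calc
  f ((n : ℕ) • s) / (n : ℕ) = (k : ℕ) * f ((n : ℕ) • s) / ((k : ℕ) * (n : ℕ)) :=
    (ENNReal.mul_div_mul_left _ _ (Nat.cast_ne_zero.2 k.ne_zero) (ENNReal.natCast_ne_top k)).symm
  _ ≤ f ((k : ℕ) • (n : ℕ) • s) / ((k : ℕ) * (n : ℕ)) := by
    gcongr
    exact mul_map_le_map_nsmul_of_superadditive hf k _
  _ = f (((k * n : ℕ+) : ℕ) • s) / ((k * n : ℕ+) : ℕ) := by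
    rw [PNat.mul_coe, mul_nsmul', Nat.cast_mul]

theorem homogenization_superadditive (hf : ∀ s t, f s + f t ≤ f (s + t)) (s t : S) :
    homogenization f s + homogenization f t ≤ homogenization f (s + t) := by
  refine ENNReal.iSup_add_iSup_le fun n k => ?_
  set m : ℕ+ := k * n with hm
  calc f ((n : ℕ) • s) / (n : ℕ) + f ((k : ℕ) • t) / (k : ℕ)
      ≤ f ((m : ℕ) • s) / (m : ℕ) + f ((m : ℕ) • t) / (m : ℕ) :=
        add_le_add (map_nsmul_div_le_of_superadditive hf n k s)
          (by rw [hm, mul_comm k n]; exact map_nsmul_div_le_of_superadditive hf k n t)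
    _ = (f ((m : ℕ) • s) + f ((m : ℕ) • t)) / (m : ℕ) := ENNReal.div_add_div_same
    _ ≤ f ((m : ℕ) • (s + t)) / (m : ℕ) := by
      rw [nsmul_add]
      gcongr
      exact hf _ _
    _ ≤ homogenization f (s + t) :=
      le_iSup (fun m : ℕ+ => f ((m : ℕ) • (s + t)) / (m : ℕ)) m

end Homogenization

variable [PartialOrder S]

theorem CC.le {s t : S} (h : CC s t) : s ≤ t :=
  (h (fun _ => t) monotone_const t (by simp [isLUB_singleton]) le_rfl).choose_spec

theorem CC.mono_left {s t r : S} (h : CC t r) (hst : s ≤ t) : CC s r :=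
  fun u hu x hx hrx => (h u hu x hx hrx).imp fun _ => hst.trans

theorem CC.mono_right {s t r : S} (h : CC s t) (htr : t ≤ r) : CC s r :=
  fun u hu x hx hrx => h u hu x hx (htr.trans hrx)

theorem CC.zero_left [IsBotZeroClass S] (s : S) : CC 0 s :=
  fun _ _ _ _ _ => ⟨0, zero_le⟩

instance CC.nonempty_left [IsBotZeroClass S] (s : S) : Nonempty {s' : S // CC s' s} :=
  ⟨⟨0, CC.zero_left s⟩⟩

/-- The axioms O2–O6, without the completeness axiom O1. Together with positivity and translation
invariance of the order (`IsBotZeroClass` and `IsOrderedAddMonoid`) these are the conditions on a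
`PreCu` semigroup satisfying O5 and O6. -/
structure PreCuO6 (S : Type*) [AddCommMonoid S] [PartialOrder S] : Prop where
  O2 : ∀ s : S, ∃ u : ℕ → S, (∀ n, CC (u n) (u (n + 1))) ∧ IsLUB (Set.range u) s
  O3 : ∀ {s₁ t₁ s₂ t₂ : S}, CC s₁ t₁ → CC s₂ t₂ → CC (s₁ + s₂) (t₁ + t₂)
  O4 : ∀ u v : ℕ → S, Monotone u → Monotone v → ∀ x y : S,
    IsLUB (Set.range u) x → IsLUB (Set.range v) y →
    IsLUB (Set.range fun n => u n + v n) (x + y)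
  O5 : ∀ {s' s t : S}, CC s' s → s ≤ t → ∃ r : S, s' + r ≤ t ∧ t ≤ s + r
  O6 : ∀ {s r t : S}, s ≤ r + t → ∀ {s' : S}, CC s' s →
    ∃ r' t' : S, s' ≤ r' + t' ∧ r' ≤ r ∧ r' ≤ s ∧ t' ≤ t ∧ t' ≤ s

theorem CuO5.isOrderedAddMonoid (hS : CuO5 S) : IsOrderedAddMonoid S where
  add_le_add_left _ _ h c := hS.addRightMono h c

theorem CuO5.isBotZeroClass (hS : CuO5 S) : IsBotZeroClass S where
  isBot_zero := hS.zeroLe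

theorem CuO6.preCuO6 (hS : CuO6 S) : PreCuO6 S where
  O2 := hS.O2
  O3 := hS.O3
  O4 := hS.O4
  O5 := hS.O5
  O6 := hS.O6

namespace PreCuO6

theorem exists_cc_between (hS : PreCuO6 S) {s'' s : S} (h : CC s'' s) :
    ∃ s' : S, CC s'' s' ∧ CC s' s := by
  obtain ⟨u, hu, hs⟩ := hS.O2 s
  obtain ⟨n, hn⟩ := h u (monotone_nat_of_le_succ fun n => (hu n).le) s hs le_rfl
  exact ⟨u (n + 1), (hu n).mono_left hn, (hu (n + 1)).mono_right (hs.1 ⟨n + 2, rfl⟩)⟩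

theorem isLUB_nsmul [IsOrderedAddMonoid S] (hS : PreCuO6 S) {u : ℕ → S} (hu : Monotone u) {x : S}
    (hx : IsLUB (Set.range u) x) (n : ℕ) : IsLUB (Set.range fun i => n • u i) (n • x) := by
  induction n with
  | zero => simp [isLUB_singleton]
  | succ n ih =>
    simp only [succ_nsmul]
    exact hS.O4 _ _ (fun _ _ hij => nsmul_le_nsmul_right (hu hij) n) hu _ _ ih hx

end PreCuO6

namespace IsFunctional

variable {l : S → ℝ≥0∞} {ε : ℝ≥0∞}

theorem map_nsmul (hl : IsFunctional l) (n : ℕ) (s : S) : l (n • s) = n * l s := by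
  induction n with
  | zero => simp [hl.map_zero]
  | succ n ih => rw [succ_nsmul, hl.map_add, ih]; push_cast; ring

theorem map_eq_iSup_cc (hl : IsFunctional l) (hS : PreCuO6 S) (s : S) :
    l s = ⨆ s' : {s' : S // CC s' s}, l s' := by
  obtain ⟨u, hu, hs⟩ := hS.O2 s
  refine le_antisymm ?_ (iSup_le fun s' => hl.mono s'.2.le)
  rw [hl.map_sup u (monotone_nat_of_le_succ fun n => (hu n).le) s hs]
  have hus (n : ℕ) : CC (u n) s := (hu n).mono_right (hs.1 ⟨n + 1, rfl⟩)
  exact iSup_le fun n => le_iSup (fun s' : {s' : S // CC s' s} => l s') ⟨u n, hus n⟩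

section Positive

variable [IsBotZeroClass S]

theorem exists_cc_map_le_add (hl : IsFunctional l) (hS : PreCuO6 S) {s : S} (hs : l s ≠ ∞)
    (hε : ε ≠ 0) : ∃ s' : S, CC s' s ∧ l s ≤ l s' + ε := by
  have h : l s < ⨆ s' : {s' : S // CC s' s}, l s' + ε := by
    rw [← ENNReal.iSup_add, ← hl.map_eq_iSup_cc hS]
    exact ENNReal.lt_add_right hs hε
  obtain ⟨⟨s', hs'⟩, h⟩ := lt_iSup_iff.1 h
  exact ⟨s', hs', h.le⟩

theorem exists_cc_le_add (hl : IsFunctional l) (hS : PreCuO6 S) {s : S} (hs : l s ≠ ∞)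
    (hε : ε ≠ 0) : ∃ s' e : S, CC s' s ∧ s ≤ s' + e ∧ l e ≤ ε := by
  obtain ⟨s'', hs''s, hle⟩ := hl.exists_cc_map_le_add hS hs hε
  obtain ⟨s', hs''s', hs's⟩ := hS.exists_cc_between hs''s
  obtain ⟨e, hes, hse⟩ := hS.O5 hs''s' hs's.le
  refine ⟨s', e, hs's, hse, ?_⟩
  have hfin : l s'' ≠ ∞ := ne_top_of_le_ne_top hs (hl.mono hs''s.le)
  rw [← ENNReal.add_le_add_iff_left hfin, ← hl.map_add]
  exact (hl.mono hes).trans hle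

variable [IsOrderedAddMonoid S]

theorem exists_le_add_add_of_le_add (hl : IsFunctional l) (hS : PreCuO6 S) {a s t : S}
    (ha : l a ≠ ∞) (hast : a ≤ s + t) (hε : ε ≠ 0) :
    ∃ x y e : S, x ≤ s ∧ x ≤ a ∧ y ≤ t ∧ y ≤ a ∧ a ≤ x + y + e ∧ l e ≤ ε := by
  obtain ⟨a', e, ha'a, hae, hle⟩ := hl.exists_cc_le_add hS ha hε
  obtain ⟨x, y, ha'xy, hxs, hxa, hyt, hya⟩ := hS.O6 hast ha'a
  exact ⟨x, y, e, hxs, hxa, hyt, hya, hae.trans (by gcongr), hle⟩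

theorem exists_nsmul_cancel (hl : IsFunctional l) (hS : PreCuO6 S) {r t g c : S}
    (hr : l r ≠ ∞) (hc : l c ≠ ∞) (h : r + c ≤ t + g + c) (hε : ε ≠ 0) :
    ∃ (n : ℕ) (y : S), n ≠ 0 ∧ y ≤ n • t ∧ y ≤ n • r ∧ n * l r ≤ l y + n * (l g + ε) := by
  obtain ⟨n, hn, hcn⟩ := ENNReal.exists_nat_pos_mul_gt hε
    (ENNReal.add_ne_top.2 ⟨hc, ENNReal.one_ne_top⟩)
  have hnr : n • r ≤ n • t + (n • g + c) := calc
    n • r ≤ n • r + c := le_add_of_nonneg_right zero_le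
    _ ≤ n • (t + g) + c := nsmul_add_le_nsmul_add h n
    _ = n • t + (n • g + c) := by rw [nsmul_add, add_assoc]
  have hfin : l (n • r) ≠ ∞ := by
    rw [hl.map_nsmul]
    exact ENNReal.mul_ne_top (ENNReal.natCast_ne_top n) hr
  obtain ⟨y, w, e, hyt, hyr, hw, -, hle, he⟩ :=
    hl.exists_le_add_add_of_le_add hS hfin hnr one_ne_zero
  refine ⟨n, y, hn.ne', hyt, hyr, ?_⟩
  calc n * l r = l (n • r) := (hl.map_nsmul n r).symm
    _ ≤ l y + l w + l e := by simpa only [hl.map_add] using hl.mono hle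
    _ ≤ l y + (n * l g + l c) + 1 := by
      gcongr
      simpa only [hl.map_add, hl.map_nsmul] using hl.mono hw
    _ = l y + n * l g + (l c + 1) := by ring
    _ ≤ l y + n * l g + n * ε := by gcongr
    _ = l y + n * (l g + ε) := by ring

theorem exists_nsmul_riesz_decomposition (hl : IsFunctional l) (hS : PreCuO6 S) {a s t : S}
    (ha : l a ≠ ∞) (hast : a ≤ s + t) (hε : ε ≠ 0) :
    ∃ (n : ℕ) (x y : S), n ≠ 0 ∧ x ≤ n • s ∧ y ≤ n • t ∧ x + y ≤ n • a ∧
      n * l a ≤ l x + l y + n * ε := by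
  obtain ⟨δ, hδ, rfl⟩ := exists_ne_zero_nsmul_eq hε four_ne_zero
  obtain ⟨a₁, a₂, e, ha₁s, ha₁a, ha₂t, -, hae, hle⟩ :=
    hl.exists_le_add_add_of_le_add hS ha hast hδ
  obtain ⟨c, f, hca₁, hcf, hlf⟩ :=
    hl.exists_cc_le_add hS (ne_top_of_le_ne_top ha (hl.mono ha₁a)) hδ
  obtain ⟨r, hcra, har⟩ := hS.O5 hca₁ ha₁a
  have hrc : r + c ≤ t + (e + f) + c := calc
    r + c = c + r := add_comm r c
    _ ≤ a := hcra
    _ ≤ a₁ + a₂ + e := hae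
    _ ≤ (c + f) + t + e := by gcongr
    _ = t + (e + f) + c := by abel
  have hlc : l c ≠ ∞ := ne_top_of_le_ne_top ha (hl.mono (hca₁.le.trans ha₁a))
  have hlr : l r ≠ ∞ :=
    ne_top_of_le_ne_top ha (hl.mono ((le_add_of_nonneg_left zero_le).trans hcra))
  obtain ⟨n, y, hn, hyt, hyr, hly⟩ := hl.exists_nsmul_cancel hS hlr hlc hrc hδ
  refine ⟨n, n • c, y, hn, nsmul_le_nsmul_right (hca₁.le.trans ha₁s) n, hyt, ?_, ?_⟩
  · calc n • c + y ≤ n • c + n • r := by gcongr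
      _ = n • (c + r) := (nsmul_add _ _ _).symm
      _ ≤ n • a := nsmul_le_nsmul_right hcra n
  · have hla : l a ≤ l c + l f + l r := by
      simpa only [hl.map_add] using hl.mono (har.trans (add_le_add_left hcf r))
    calc n * l a ≤ n * (l c + l f + l r) := by gcongr
      _ = n * l c + n * l f + n * l r := by ring
      _ ≤ n * l c + n * δ + (l y + n * (l e + l f + δ)) := by
        rw [hl.map_add] at hly
        gcongr
      _ ≤ n * l c + n * δ + (l y + n * (δ + δ + δ)) := by gcongr
      _ = l (n • c) + l y + n * (4 • δ) := by rw [hl.map_nsmul]; ring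

end Positive

theorem mul_map_le_of_add_le_add [IsOrderedAddMonoid S] (hl : IsFunctional l)
    {a b s t x y p q : S} {n : ℕ} (hab : a + b ≤ s + t) (ha : l a ≠ ∞) (hxy : x + y ≤ n • a)
    (hs : n • s ≤ x + p) (ht : n • t ≤ y + q) : n * l b ≤ l p + l q := by
  have hnab : n • a + n • b ≤ n • a + (p + q) := calc
    n • a + n • b = n • (a + b) := (nsmul_add _ _ _).symm
    _ ≤ n • (s + t) := nsmul_le_nsmul_right hab n
    _ = n • s + n • t := nsmul_add _ _ _
    _ ≤ (x + p) + (y + q) := by gcongr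
    _ = (x + y) + (p + q) := add_add_add_comm _ _ _ _
    _ ≤ n • a + (p + q) := by gcongr
  rw [← ENNReal.add_le_add_iff_left (ENNReal.mul_ne_top (ENNReal.natCast_ne_top n) ha)]
  simpa only [hl.map_add, hl.map_nsmul] using hl.mono hnab

end IsFunctional

section Homogenization

variable {f : S → ℝ≥0∞} [IsOrderedAddMonoid S]

theorem homogenization_mono (hf : Monotone f) : Monotone (homogenization f) :=
  fun _ _ hst => iSup_mono fun _ => ENNReal.div_le_div_right (hf (nsmul_le_nsmul_right hst _)) _

theorem homogenization_map_sup (hS : PreCuO6 S)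
    (hf : ∀ u : ℕ → S, Monotone u → ∀ x : S, IsLUB (Set.range u) x → f x = ⨆ i, f (u i))
    {u : ℕ → S} (hu : Monotone u) {x : S} (hx : IsLUB (Set.range u) x) :
    homogenization f x = ⨆ i, homogenization f (u i) := by
  have hnsmul (n : ℕ) : f (n • x) = ⨆ i, f (n • u i) :=
    hf _ (fun _ _ hij => nsmul_le_nsmul_right (hu hij) n) _ (hS.isLUB_nsmul hu hx n)
  simp only [homogenization, hnsmul, ENNReal.iSup_div]
  exact iSup_comm

theorem isFunctional_homogenization (hS : PreCuO6 S) (h₀ : f 0 = 0) (hmono : Monotone f)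
    (hsup : ∀ u : ℕ → S, Monotone u → ∀ x : S, IsLUB (Set.range u) x → f x = ⨆ i, f (u i))
    (hsuper : ∀ s t, f s + f t ≤ f (s + t))
    (hsub : ∀ s t, f (s + t) ≤ homogenization f s + homogenization f t) :
    IsFunctional (homogenization f) where
  map_zero := homogenization_zero h₀
  map_add s t :=
    le_antisymm (homogenization_add_le hsub s t) (homogenization_superadditive hsuper s t)
  mono hst := homogenization_mono hmono hst
  map_sup _ hu _ hx := homogenization_map_sup hS hsup hu hx

end Homogenization

/-- The Riesz–Kantorovich formula for the supremum of two functionals. -/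
noncomputable def rieszKantorovich (l₁ l₂ : S → ℝ≥0∞) (s : S) : ℝ≥0∞ :=
  ⨆ p : {p : S × S // p.1 + p.2 ≤ s}, l₁ p.1.1 + l₂ p.1.2

section RieszKantorovich

variable {l₁ l₂ : S → ℝ≥0∞}

theorem rieszKantorovich_le_iff {s : S} {c : ℝ≥0∞} :
    rieszKantorovich l₁ l₂ s ≤ c ↔ ∀ a b : S, a + b ≤ s → l₁ a + l₂ b ≤ c := by
  simp only [rieszKantorovich, iSup_le_iff, Subtype.forall, Prod.forall]

theorem add_le_rieszKantorovich {s a b : S} (h : a + b ≤ s) :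
    l₁ a + l₂ b ≤ rieszKantorovich l₁ l₂ s :=
  rieszKantorovich_le_iff.1 le_rfl a b h

theorem left_le_rieszKantorovich (s : S) : l₁ s ≤ rieszKantorovich l₁ l₂ s :=
  le_self_add.trans (add_le_rieszKantorovich (add_zero s).le)

theorem right_le_rieszKantorovich (s : S) : l₂ s ≤ rieszKantorovich l₁ l₂ s :=
  le_add_self.trans (add_le_rieszKantorovich (zero_add s).le)

theorem rieszKantorovich_mono : Monotone (rieszKantorovich l₁ l₂) :=
  fun _ _ hst => rieszKantorovich_le_iff.2 fun _ _ hab => add_le_rieszKantorovich (hab.trans hst)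

theorem rieszKantorovich_le {d : S → ℝ≥0∞} (hd : IsFunctional d) (h₁ : ∀ s, l₁ s ≤ d s)
    (h₂ : ∀ s, l₂ s ≤ d s) (s : S) : rieszKantorovich l₁ l₂ s ≤ d s :=
  rieszKantorovich_le_iff.2 fun a b hab => calc
    l₁ a + l₂ b ≤ d a + d b := add_le_add (h₁ a) (h₂ b)
    _ = d (a + b) := (hd.map_add a b).symm
    _ ≤ d s := hd.mono hab

variable [IsBotZeroClass S]

theorem rieszKantorovich_map_sup (hS : PreCuO6 S) (h₁ : IsFunctional l₁) (h₂ : IsFunctional l₂)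
    {u : ℕ → S} (hu : Monotone u) {x : S} (hx : IsLUB (Set.range u) x) :
    rieszKantorovich l₁ l₂ x = ⨆ i, rieszKantorovich l₁ l₂ (u i) := by
  refine le_antisymm (rieszKantorovich_le_iff.2 fun a b hab => ?_)
    (iSup_le fun i => rieszKantorovich_mono (hx.1 ⟨i, rfl⟩))
  rw [h₁.map_eq_iSup_cc hS, h₂.map_eq_iSup_cc hS]
  refine ENNReal.iSup_add_iSup_le fun ⟨a', ha'⟩ ⟨b', hb'⟩ => ?_
  obtain ⟨i, hi⟩ := hS.O3 ha' hb' u hu x hx hab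
  exact le_iSup_of_le i (add_le_rieszKantorovich hi)

theorem exists_complement_le_rieszKantorovich (hS : PreCuO6 S) (h₁ : IsFunctional l₁) {x s : S}
    (hx : l₁ x ≠ ∞) (hxs : x ≤ s) {ε : ℝ≥0∞} (hε : ε ≠ 0) :
    ∃ p : S, s ≤ x + p ∧ l₁ x + l₂ p ≤ rieszKantorovich l₁ l₂ s + ε := by
  obtain ⟨x', hx'x, hle⟩ := h₁.exists_cc_map_le_add hS hx hε
  obtain ⟨p, hps, hsp⟩ := hS.O5 hx'x hxs
  refine ⟨p, hsp, ?_⟩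
  calc l₁ x + l₂ p ≤ l₁ x' + ε + l₂ p := by gcongr
    _ = l₁ x' + l₂ p + ε := add_right_comm _ _ _
    _ ≤ rieszKantorovich l₁ l₂ s + ε := by gcongr; exact add_le_rieszKantorovich hps

variable [IsOrderedAddMonoid S]

theorem rieszKantorovich_zero (h₁ : l₁ 0 = 0) (h₂ : l₂ 0 = 0) :
    rieszKantorovich l₁ l₂ 0 = 0 := by
  refine le_antisymm (rieszKantorovich_le_iff.2 fun a b hab => ?_) zero_le
  obtain ⟨rfl, rfl⟩ := (add_eq_zero_iff_of_nonneg zero_le zero_le).1 (le_antisymm hab zero_le)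
  rw [h₁, h₂, add_zero]

theorem rieszKantorovich_superadditive (h₁ : IsFunctional l₁) (h₂ : IsFunctional l₂) (s t : S) :
    rieszKantorovich l₁ l₂ s + rieszKantorovich l₁ l₂ t ≤ rieszKantorovich l₁ l₂ (s + t) := by
  have hne (r : S) : Nonempty {p : S × S // p.1 + p.2 ≤ r} :=
    ⟨⟨(0, 0), (add_zero 0).trans_le zero_le⟩⟩
  have := hne s
  have := hne t
  refine ENNReal.iSup_add_iSup_le ?_
  rintro ⟨⟨a, b⟩, hab⟩ ⟨⟨c, d⟩, hcd⟩
  calc l₁ a + l₂ b + (l₁ c + l₂ d) = l₁ (a + c) + l₂ (b + d) := by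
        rw [h₁.map_add, h₂.map_add]; ring
    _ ≤ rieszKantorovich l₁ l₂ (s + t) :=
        add_le_rieszKantorovich ((add_add_add_comm a c b d).trans_le (add_le_add hab hcd))

theorem exists_nsmul_add_le_rieszKantorovich (hS : PreCuO6 S) (h₁ : IsFunctional l₁)
    (h₂ : IsFunctional l₂) {a b s t : S} (ha₁ : l₁ a ≠ ∞) (ha₂ : l₂ a ≠ ∞) (hab : a + b ≤ s + t)
    {ε : ℝ≥0∞} (hε : ε ≠ 0) :
    ∃ n : ℕ, n ≠ 0 ∧ n * (l₁ a + l₂ b) ≤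
      rieszKantorovich l₁ l₂ (n • s) + rieszKantorovich l₁ l₂ (n • t) + n * ε := by
  obtain ⟨δ, hδ, rfl⟩ := exists_ne_zero_nsmul_eq hε three_ne_zero
  obtain ⟨n, x, y, hn, hxs, hyt, hxy, hla⟩ := h₁.exists_nsmul_riesz_decomposition hS ha₁
    ((le_add_of_nonneg_right zero_le).trans hab) hδ
  have hn_top : (n : ℝ≥0∞) ≠ ∞ := ENNReal.natCast_ne_top n
  have hlxy : l₁ x + l₁ y ≠ ∞ := ne_top_of_le_ne_top (ENNReal.mul_ne_top hn_top ha₁) <| by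
    simpa only [h₁.map_add, h₁.map_nsmul] using h₁.mono hxy
  obtain ⟨hlx, hly⟩ := ENNReal.add_ne_top.1 hlxy
  obtain ⟨p, hsp, hp⟩ := exists_complement_le_rieszKantorovich (l₂ := l₂) hS h₁ hlx hxs hδ
  obtain ⟨q, htq, hq⟩ := exists_complement_le_rieszKantorovich (l₂ := l₂) hS h₁ hly hyt hδ
  have hlb : n * l₂ b ≤ l₂ p + l₂ q := h₂.mul_map_le_of_add_le_add hab ha₂ hxy hsp htq
  have hδn : δ ≤ n * δ :=
    le_mul_of_one_le_left zero_le (by exact_mod_cast Nat.one_le_iff_ne_zero.2 hn)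
  refine ⟨n, hn, ?_⟩
  calc n * (l₁ a + l₂ b) = n * l₁ a + n * l₂ b := mul_add _ _ _
    _ ≤ (l₁ x + l₁ y + n * δ) + (l₂ p + l₂ q) := by gcongr
    _ = (l₁ x + l₂ p) + (l₁ y + l₂ q) + n * δ := by ring
    _ ≤ (rieszKantorovich l₁ l₂ (n • s) + n * δ) + (rieszKantorovich l₁ l₂ (n • t) + n * δ)
          + n * δ := by
      have hp' := hp.trans (add_le_add_right hδn _)
      have hq' := hq.trans (add_le_add_right hδn _)
      gcongr
    _ = rieszKantorovich l₁ l₂ (n • s) + rieszKantorovich l₁ l₂ (n • t) + n * (3 • δ) := by ring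

theorem rieszKantorovich_add_le_homogenization (hS : PreCuO6 S) (h₁ : IsFunctional l₁)
    (h₂ : IsFunctional l₂) (s t : S) :
    rieszKantorovich l₁ l₂ (s + t) ≤
      homogenization (rieszKantorovich l₁ l₂) s + homogenization (rieszKantorovich l₁ l₂) t := by
  refine rieszKantorovich_le_iff.2 fun a b hab => ?_
  set M := homogenization (rieszKantorovich l₁ l₂) s + homogenization (rieszKantorovich l₁ l₂) t
    with hM
  by_cases hM_top : M = ∞
  · exact hM_top ▸ le_top
  have ha : a ≤ s + t := (le_add_of_nonneg_right zero_le).trans hab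
  have hfin {l : S → ℝ≥0∞} (hl : IsFunctional l) (hle : ∀ r, l r ≤ rieszKantorovich l₁ l₂ r) :
      l a ≠ ∞ := by
    refine ne_top_of_le_ne_top hM_top ?_
    calc l a ≤ l (s + t) := hl.mono ha
      _ = l s + l t := hl.map_add s t
      _ ≤ M :=
        add_le_add ((hle s).trans (le_homogenization s)) ((hle t).trans (le_homogenization t))
  refine ENNReal.le_of_forall_pos_le_add fun ε hε _ => ?_
  obtain ⟨n, hn, hle⟩ := exists_nsmul_add_le_rieszKantorovich hS h₁ h₂
    (hfin h₁ left_le_rieszKantorovich) (hfin h₂ right_le_rieszKantorovich) hab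
    (ENNReal.coe_ne_zero.2 hε.ne')
  rw [← ENNReal.mul_le_mul_iff_right (Nat.cast_ne_zero.2 hn) (ENNReal.natCast_ne_top n)]
  calc n * (l₁ a + l₂ b)
      ≤ rieszKantorovich l₁ l₂ (n • s) + rieszKantorovich l₁ l₂ (n • t) + n * ε := hle
    _ ≤ n * homogenization (rieszKantorovich l₁ l₂) s
          + n * homogenization (rieszKantorovich l₁ l₂) t + n * ε := by
      gcongr <;> exact map_nsmul_le_mul_homogenization hn _
    _ = n * (M + ε) := by rw [hM]; ring

end RieszKantorovich

end FunctionalSup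

theorem exists_functional_sup_general {S : Type*} [AddCommMonoid S] [PartialOrder S]
    [IsOrderedAddMonoid S] [IsBotZeroClass S] (hS : PreCuO6 S) (l₁ l₂ : S → ℝ≥0∞)
    (h₁ : IsFunctional l₁) (h₂ : IsFunctional l₂) : ∃ m : S → ℝ≥0∞, IsFSup l₁ l₂ m := by
  refine ⟨homogenization (rieszKantorovich l₁ l₂), ?_, fun s => ?_, fun s => ?_, ?_⟩
  · exact isFunctional_homogenization hS (rieszKantorovich_zero h₁.map_zero h₂.map_zero)
      rieszKantorovich_mono
      (fun _ hu _ hx => rieszKantorovich_map_sup hS h₁ h₂ hu hx)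
      (rieszKantorovich_superadditive h₁ h₂) (rieszKantorovich_add_le_homogenization hS h₁ h₂)
  · exact (left_le_rieszKantorovich s).trans (le_homogenization s)
  · exact (right_le_rieszKantorovich s).trans (le_homogenization s)
  · intro d hd h₁d h₂d
    exact homogenization_le (fun n s => (hd.map_nsmul n s).le) (rieszKantorovich_le hd h₁d h₂d)

/-- any two functionals on an O1-O6 semigroup have a least upper bound in F(S). -/
theorem exists_functional_sup {S : Type*} [AddCommMonoid S] [PartialOrder S]
    (hS : CuO6 S) (l₁ l₂ : S → ℝ≥0∞) (h₁ : IsFunctional l₁) (h₂ : IsFunctional l₂) :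
    ∃ m : S → ℝ≥0∞, IsFSup l₁ l₂ m := by
  have := hS.isOrderedAddMonoid
  have := hS.isBotZeroClass
  exact exists_functional_sup_general hS.preCuO6 l₁ l₂ h₁ h₂
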